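/- arXiv:1812.09498 — 2 statements merged into one kernel-verified Lean document; each statement's English description precedes it below -/
import Mathlib

section
/- Let v ∈ C²([a,b]) satisfy v''(x) = q(x)·v(x) on [a,b] with v(a) = 1 and v(b) = 0. Then v is nonincreasing on [a,b] and 0 ≤ v(x) ≤ 1 for every x ∈ [a,b]. -/
open Set

noncomputable section

/-- `v` is twice continuously differentiable on `s`, with first derivative `v'`
and second derivative `v''` (derivatives within `s`). -/
def IsC2On (v v' v'' : ℝ → ℝ) (s : Set ℝ) : Prop :=
  (∀ x ∈ s, HasDerivWithinAt v (v' x) s x) ∧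
  (∀ x ∈ s, HasDerivWithinAt v' (v'' x) s x) ∧
  ContinuousOn v'' s

/-- if `v ∈ C²([a,b])` satisfies `v'' = q·v` with `q ≥ 0` continuous,
`v(a) = 1` and `v(b) = 0`, then `v` is nonincreasing and `0 ≤ v ≤ 1` on `[a,b]`. -/
theorem linear_ode_solution_monotone_bounded
    (a b : ℝ) (hab : a < b)
    (q : ℝ → ℝ) (hq : ContinuousOn q (Icc a b))
    (hq0 : ∀ x ∈ Icc a b, 0 ≤ q x)
    (v v' v'' : ℝ → ℝ)
    (hv : IsC2On v v' v'' (Icc a b))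
    (hode : ∀ x ∈ Icc a b, v'' x = q x * v x)
    (hva : v a = 1) (hvb : v b = 0) :
    AntitoneOn v (Icc a b) ∧ ∀ x ∈ Icc a b, 0 ≤ v x ∧ v x ≤ 1 := by
  obtain ⟨hv₁, hv₂, -⟩ := hv
  have hcont : ContinuousOn v (Icc a b) := fun x hx => (hv₁ x hx).continuousWithinAt
  have hbmem : b ∈ Icc a b := right_mem_Icc.2 hab.le
  have hmono : MonotoneOn (fun x => v x * v' x) (Icc a b) := by
    refine monotoneOn_of_hasDerivWithinAt_nonneg (convex_Icc a b)
      (f' := fun x => v' x * v' x + v x * v'' x)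
      (fun x hx => ((hv₁ x hx).mul (hv₂ x hx)).continuousWithinAt)
      (fun x hx => ((hv₁ x (interior_subset hx)).mul (hv₂ x (interior_subset hx))).mono
        interior_subset) (fun x hx => ?_)
    have hx' := interior_subset hx
    rw [hode x hx']
    nlinarith [mul_self_nonneg (v' x), mul_nonneg (hq0 x hx') (mul_self_nonneg (v x))]
  have hnonpos : ∀ x ∈ Icc a b, v x * v' x ≤ 0 := fun x hx => by
    simpa [hvb] using hmono hx hbmem hx.2
  have hsq : AntitoneOn (fun x => v x * v x) (Icc a b) := by
    refine antitoneOn_of_hasDerivWithinAt_nonpos (convex_Icc a b)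
      (f' := fun x => v' x * v x + v x * v' x) (hcont.mul hcont)
      (fun x hx => ((hv₁ x (interior_subset hx)).mul (hv₁ x (interior_subset hx))).mono
        interior_subset) (fun x hx => ?_)
    linarith [mul_comm (v x) (v' x), hnonpos x (interior_subset hx)]
  -- Once `v` vanishes it stays zero, so it cannot change sign.
  have hnonneg : ∀ x ∈ Icc a b, 0 ≤ v x := by
    intro x hx
    by_contra! hneg
    obtain ⟨z, hz, hvz⟩ := intermediate_value_Icc' hx.1
      (hcont.mono (Icc_subset_Icc_right hx.2)) (show (0 : ℝ) ∈ Icc (v x) (v a) by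
        rw [hva]; exact ⟨hneg.le, zero_le_one⟩)
    have hle : v x * v x ≤ v z * v z := hsq ⟨hz.1, hz.2.trans hx.2⟩ hx hz.2
    rw [hvz] at hle
    nlinarith
  have hanti : AntitoneOn v (Icc a b) := fun x hx y hy hxy =>
    (mul_self_le_mul_self_iff (hnonneg y hy) (hnonneg x hx)).2 (hsq hx hy hxy)
  exact ⟨hanti, fun x hx =>
    ⟨hnonneg x hx, hva ▸ hanti (left_mem_Icc.2 hab.le) hx hx.1⟩⟩
end
end

section
/- Let v ∈ C²([a,b]) satisfy v''(x) = q(x)·v(x) on [a,b] with v(a) = 1 and v(b) = 0. Then v' is nondecreasing on [a,b], v'(x) ≤ 0 for every x ∈ [a,b], and for every c ∈ (a,b] one has −v'(a) ≤ 1/(c − a) + (c − a)·max_{x ∈ [a,c]} q(x); consequently |v'(x)| ≤ 1/(c − a) + (c − a)·max_{x ∈ [a,c]} q(x) for every x ∈ [a,b]. -/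
open Set

noncomputable section

/-- A function on a convex set with nonnegative derivative there is monotone on the set. -/
theorem Convex.monotoneOn_of_forall_hasDerivWithinAt_nonneg {s : Set ℝ} (hs : Convex ℝ s)
    {f f' : ℝ → ℝ} (hf : ∀ x ∈ s, HasDerivWithinAt f (f' x) s x)
    (hf' : ∀ x ∈ s, 0 ≤ f' x) : MonotoneOn f s :=
  monotoneOn_of_hasDerivWithinAt_nonneg hs (fun x hx => (hf x hx).continuousWithinAt)
    (fun x hx => (hf x (interior_subset hx)).mono interior_subset)
    (fun x hx => hf' x (interior_subset hx))

/-- A function on a convex set with nonpositive derivative there is antitone on the set. -/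
theorem Convex.antitoneOn_of_forall_hasDerivWithinAt_nonpos {s : Set ℝ} (hs : Convex ℝ s)
    {f f' : ℝ → ℝ} (hf : ∀ x ∈ s, HasDerivWithinAt f (f' x) s x)
    (hf' : ∀ x ∈ s, f' x ≤ 0) : AntitoneOn f s :=
  antitoneOn_of_hasDerivWithinAt_nonpos hs (fun x hx => (hf x hx).continuousWithinAt)
    (fun x hx => (hf x (interior_subset hx)).mono interior_subset)
    (fun x hx => hf' x (interior_subset hx))

/-- The mean value theorem on `[a, c] ⊆ [a, b]` for derivatives within `[a, b]`. -/
theorem exists_hasDerivWithinAt_Icc_eq_slope {f f' : ℝ → ℝ} {a b c : ℝ}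
    (hf : ∀ x ∈ Icc a b, HasDerivWithinAt f (f' x) (Icc a b) x) (hac : a < c) (hcb : c ≤ b) :
    ∃ ξ ∈ Ioo a c, f' ξ = (f c - f a) / (c - a) := by
  refine exists_hasDerivAt_eq_slope f f' hac
    (fun x hx => ((hf x ⟨hx.1, hx.2.trans hcb⟩).continuousWithinAt).mono
      (Icc_subset_Icc_right hcb)) (fun x hx => ?_)
  exact (hf x ⟨hx.1.le, hx.2.le.trans hcb⟩).hasDerivAt
    (Icc_mem_nhds hx.1 (hx.2.trans_le hcb))

/-- If `f ≥ 0` on `[a, b]` and `f b = 0`, then the left derivative of `f` at `b` is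
nonpositive. -/
theorem HasDerivWithinAt.nonpos_of_nonneg_of_right_eq_zero {f : ℝ → ℝ} {m a b : ℝ} (hab : a < b)
    (hf : HasDerivWithinAt f m (Icc a b) b) (hf0 : ∀ x ∈ Icc a b, 0 ≤ f x) (hfb : f b = 0) :
    m ≤ 0 := by
  have h := hasDerivWithinAt_iff_tendsto_slope.1 hf
  rw [Icc_sdiff_right] at h
  have : (nhdsWithin b (Ico a b)).NeBot := by
    rw [nhdsWithin_Ico_eq_nhdsLT hab]
    infer_instance
  refine le_of_tendsto h (Filter.eventually_of_mem self_mem_nhdsWithin fun x hx => ?_)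
  rw [slope_def_field, hfb, sub_zero]
  exact div_nonpos_of_nonneg_of_nonpos (hf0 x ⟨hx.1, hx.2.le⟩) (sub_nonpos.2 hx.2.le)

/-- A solution of `v'' = q v` on `[a, b]` with `q ≥ 0`, `v a ≥ 0` and `v b = 0` is nonnegative. -/
theorem linear_ode_solution_nonneg {a b : ℝ} {q v v' v'' : ℝ → ℝ}
    (hq0 : ∀ x ∈ Icc a b, 0 ≤ q x)
    (hv : ∀ x ∈ Icc a b, HasDerivWithinAt v (v' x) (Icc a b) x)
    (hv' : ∀ x ∈ Icc a b, HasDerivWithinAt v' (v'' x) (Icc a b) x)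
    (hode : ∀ x ∈ Icc a b, v'' x = q x * v x) (hva : 0 ≤ v a) (hvb : v b = 0) :
    ∀ x ∈ Icc a b, 0 ≤ v x := by
  have hmono : MonotoneOn (fun x => v x * v' x) (Icc a b) := by
    refine (convex_Icc a b).monotoneOn_of_forall_hasDerivWithinAt_nonneg
      (fun x hx => (hv x hx).mul (hv' x hx)) (fun x hx => ?_)
    rw [hode x hx]
    nlinarith [mul_nonneg (hq0 x hx) (mul_self_nonneg (v x)), mul_self_nonneg (v' x)]
  have hanti : AntitoneOn (fun x => v x * v x) (Icc a b) := by
    refine (convex_Icc a b).antitoneOn_of_forall_hasDerivWithinAt_nonpos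
      (fun x hx => (hv x hx).mul (hv x hx)) (fun x hx => ?_)
    have h := hmono hx (right_mem_Icc.2 (hx.1.trans hx.2)) hx.2
    simp only [hvb, zero_mul] at h
    linarith
  intro x hx
  by_contra! hneg
  obtain ⟨z, hz, hvz⟩ : (0 : ℝ) ∈ v '' Icc a x :=
    intermediate_value_Icc' hx.1
      (fun y hy => ((hv y ⟨hy.1, hy.2.trans hx.2⟩).continuousWithinAt).mono
        (Icc_subset_Icc_right hx.2)) ⟨hneg.le, hva⟩
  have h := hanti ⟨hz.1, hz.2.trans hx.2⟩ hx hz.2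
  simp only [hvz, mul_zero] at h
  nlinarith

/-- if `v ∈ C²([a,b])` satisfies `v'' = q·v` with `q ≥ 0` continuous,
`v(a) = 1` and `v(b) = 0`, then `v'` is nondecreasing and nonpositive on `[a,b]`, and
for every `c ∈ (a,b]` one has `−v'(a) ≤ 1/(c−a) + (c−a)·max_{[a,c]} q`; consequently
`|v'(x)|` obeys the same bound for every `x ∈ [a,b]`. -/
theorem linear_ode_solution_derivative_bound
    (a b : ℝ) (hab : a < b)
    (q : ℝ → ℝ) (hq : ContinuousOn q (Icc a b))
    (hq0 : ∀ x ∈ Icc a b, 0 ≤ q x)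
    (v v' v'' : ℝ → ℝ)
    (hv : IsC2On v v' v'' (Icc a b))
    (hode : ∀ x ∈ Icc a b, v'' x = q x * v x)
    (hva : v a = 1) (hvb : v b = 0) :
    MonotoneOn v' (Icc a b) ∧ (∀ x ∈ Icc a b, v' x ≤ 0) ∧
    ∀ c ∈ Ioc a b,
      -(v' a) ≤ 1 / (c - a) + (c - a) * sSup (q '' Icc a c) ∧
      ∀ x ∈ Icc a b, |v' x| ≤ 1 / (c - a) + (c - a) * sSup (q '' Icc a c) := by
  obtain ⟨hv1, hv2, -⟩ := hv
  have ha : a ∈ Icc a b := left_mem_Icc.2 hab.le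
  have hb : b ∈ Icc a b := right_mem_Icc.2 hab.le
  have hnonneg : ∀ x ∈ Icc a b, 0 ≤ v x :=
    linear_ode_solution_nonneg hq0 hv1 hv2 hode (by simp [hva]) hvb
  have hmono : MonotoneOn v' (Icc a b) :=
    (convex_Icc a b).monotoneOn_of_forall_hasDerivWithinAt_nonneg hv2 fun x hx => by
      rw [hode x hx]
      exact mul_nonneg (hq0 x hx) (hnonneg x hx)
  have hnonpos : ∀ x ∈ Icc a b, v' x ≤ 0 := fun x hx =>
    (hmono hx hb hx.2).trans ((hv1 b hb).nonpos_of_nonneg_of_right_eq_zero hab hnonneg hvb)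
  have hanti : AntitoneOn v (Icc a b) :=
    (convex_Icc a b).antitoneOn_of_forall_hasDerivWithinAt_nonpos hv1 hnonpos
  refine ⟨hmono, hnonpos, fun c hc => ?_⟩
  have hbound : -(v' a) ≤ 1 / (c - a) + (c - a) * sSup (q '' Icc a c) := by
    obtain ⟨ξ, hξ, hξv⟩ := exists_hasDerivWithinAt_Icc_eq_slope hv1 hc.1 hc.2
    obtain ⟨η, hη, hηv⟩ :=
      exists_hasDerivWithinAt_Icc_eq_slope hv2 hξ.1 (hξ.2.le.trans hc.2)
    have hηc : η ∈ Icc a c := ⟨hη.1.le, hη.2.le.trans hξ.2.le⟩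
    have hηb : η ∈ Icc a b := ⟨hηc.1, hηc.2.trans hc.2⟩
    have hqη : q η ≤ sSup (q '' Icc a c) :=
      le_csSup (isCompact_Icc.image_of_continuousOn
        (hq.mono (Icc_subset_Icc_right hc.2))).bddAbove (mem_image_of_mem q hηc)
    have hvη : v η ≤ 1 := hva ▸ hanti ha hηb hηb.1
    have hv''η : v'' η ≤ sSup (q '' Icc a c) := by
      rw [hode η hηb]
      exact (mul_le_of_le_one_right (hq0 η hηb) hvη).trans hqη
    have hincr : v' ξ - v' a ≤ (c - a) * sSup (q '' Icc a c) := by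
      rw [eq_div_iff (sub_pos.2 hξ.1).ne'] at hηv
      rw [← hηv, mul_comm]
      exact mul_le_mul (by linarith [hξ.2]) hv''η
        (by rw [hode η hηb]; exact mul_nonneg (hq0 η hηb) (hnonneg η hηb))
        (sub_pos.2 hc.1).le
    have hslope : -(v' ξ) ≤ 1 / (c - a) := by
      rw [hξv, hva, ← neg_div]
      refine div_le_div_of_nonneg_right ?_ (sub_pos.2 hc.1).le
      linarith [hnonneg c ⟨hc.1.le, hc.2⟩]
    linarith
  refine ⟨hbound, fun x hx => ?_⟩
  rw [abs_of_nonpos (hnonpos x hx)]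
  exact (neg_le_neg (hmono ha hx hx.1)).trans hbound
end
end
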